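/- arXiv:2105.12533 — 7 statements merged into one kernel-verified Lean document; each statement's English description precedes it below -/
import Mathlib

section
/- Let g be a finite-dimensional real Lie algebra equipped with an inner product ⟨·,·⟩ that is invariant in the sense that ⟨[x,y],z⟩ = ⟨x,[y,z]⟩ for all x,y,z ∈ g. Let σ and τ be involutive Lie algebra automorphisms of g preserving the inner product, and set m := {x ∈ g : σ(x) = −x} and p := {x ∈ g : τ(x) = −x}. Let t be an abelian subspace of m ∩ p ([η,η'] = 0 for all η,η' ∈ t) that is maximal abelian in m ∩ p, i.e., every x ∈ m ∩ p with [x,η] = 0 for all η ∈ t belongs to t. For β ∈ t put g_β := {x ∈ g : [η,[η,x]] = −⟨β,η⟩² x for all η ∈ t}. Let α ∈ t with α ≠ 0, and assume g_α ≠ {0}, g_{2α} ≠ {0} and g_{3α} = {0}. Then dim g_α > dim g_{2α}. -/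
open scoped RealInnerProductSpace

/-- The restricted root space `g_β = {x ∈ g : [η,[η,x]] = -⟨β,η⟩² x for all η ∈ t}`
associated with a bilinear bracket `B` on `g`, an abelian subspace `t` and a vector `β`. -/
def restrictedRootSpace {g : Type*} [NormedAddCommGroup g] [InnerProductSpace ℝ g]
    (B : g →ₗ[ℝ] g →ₗ[ℝ] g) (t : Submodule ℝ g) (β : g) : Submodule ℝ g where
  carrier := {x : g | ∀ η ∈ t, B η (B η x) = (-(⟪β, η⟫ ^ 2)) • x}
  add_mem' := by
    intro x y hx hy η hη
    rw [map_add, map_add, hx η hη, hy η hη, smul_add]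
  zero_mem' := by
    intro η hη
    rw [map_zero, map_zero, smul_zero]
  smul_mem' := by
    intro c x hx η hη
    rw [map_smul, map_smul, hx η hη, smul_comm]

theorem aux_exists_eig {g : Type*} [NormedAddCommGroup g] [InnerProductSpace ℝ g]
    [FiniteDimensional ℝ g] (T : g →ₗ[ℝ] g) (hT : T.IsSymmetric) (W : Submodule ℝ g)
    (hTW : ∀ x ∈ W, T x ∈ W) (x0 : g) (hx0 : x0 ∈ W) (hx : x0 ≠ 0) :
    ∃ μ : ℝ, ∃ a ∈ W, a ≠ 0 ∧ T a = μ • a := by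
  have hs := hT.restrict_invariant hTW
  have : Nontrivial W := ⟨⟨⟨x0, hx0⟩, 0, fun h => hx (congrArg Subtype.val h)⟩⟩
  have h := hs.hasEigenvalue_iSup_of_finiteDimensional
  obtain ⟨v, hv⟩ := h.exists_hasEigenvector
  generalize (RCLike.ofReal _ : ℝ) = μ at hv
  refine ⟨μ, v.1, v.2, fun h => hv.2 (Subtype.ext h), ?_⟩
  exact congrArg Subtype.val hv.apply_eq_smul

/-- Lemma 7.1: for a real Lie algebra `g` (bracket `B`) with an invariant inner product,
two inner-product-preserving involutive automorphisms `σ`, `τ` with `(-1)`-eigenspaces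
`m`, `p`, and a maximal abelian subspace `t` of `m ∩ p`, if `α ≠ 0` is such that
`g_α ≠ 0`, `g_{2α} ≠ 0` and `g_{3α} = 0`, then `dim g_α > dim g_{2α}`. -/
theorem finrank_rootSpace_two_smul_lt
    {g : Type*} [NormedAddCommGroup g] [InnerProductSpace ℝ g] [FiniteDimensional ℝ g]
    (B : g →ₗ[ℝ] g →ₗ[ℝ] g)
    (halt : ∀ x : g, B x x = 0)
    (hjac : ∀ x y z : g, B x (B y z) = B (B x y) z + B y (B x z))
    (hinv : ∀ x y z : g, ⟪B x y, z⟫ = ⟪x, B y z⟫)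
    (σ τ : g →ₗ[ℝ] g)
    (hσinv : ∀ x : g, σ (σ x) = x) (hτinv : ∀ x : g, τ (τ x) = x)
    (hσaut : ∀ x y : g, σ (B x y) = B (σ x) (σ y))
    (hτaut : ∀ x y : g, τ (B x y) = B (τ x) (τ y))
    (hσort : ∀ x y : g, ⟪σ x, σ y⟫ = ⟪x, y⟫)
    (hτort : ∀ x y : g, ⟪τ x, τ y⟫ = ⟪x, y⟫)
    (t : Submodule ℝ g)
    (htmp : ∀ x ∈ t, σ x = -x ∧ τ x = -x)
    (htab : ∀ η ∈ t, ∀ η' ∈ t, B η η' = 0)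
    (htmax : ∀ x : g, σ x = -x → τ x = -x → (∀ η ∈ t, B x η = 0) → x ∈ t)
    (α : g) (hαt : α ∈ t) (hα : α ≠ 0)
    (h1 : restrictedRootSpace B t α ≠ ⊥)
    (h2 : restrictedRootSpace B t ((2 : ℝ) • α) ≠ ⊥)
    (h3 : restrictedRootSpace B t ((3 : ℝ) • α) = ⊥) :
    Module.finrank ℝ (restrictedRootSpace B t ((2 : ℝ) • α)) <
      Module.finrank ℝ (restrictedRootSpace B t α) := by
  have hanti : ∀ x y, B x y = - B y x := by
    intro x y
    have h := halt (x + y)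
    simp only [map_add, LinearMap.add_apply, halt, zero_add, add_zero] at h
    exact eq_neg_of_add_eq_zero_right h
  have hskew : ∀ x y z, ⟪B x y, z⟫ = -⟪y, B x z⟫ := by
    intro x y z
    rw [hanti x y, inner_neg_left, hinv]
  obtain ⟨N, hN⟩ : ∃ N : ℝ, N = ⟪α, α⟫ := ⟨_, rfl⟩
  have hN0 : N ≠ 0 := by rw [hN]; exact inner_self_ne_zero.mpr hα
  obtain ⟨D, hD⟩ : ∃ D : g →ₗ[ℝ] g, ∀ x, D x = N⁻¹ • B α x := ⟨N⁻¹ • B α, fun x => rfl⟩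
  have hBα : ∀ x, B α x = N • D x := by
    intro x; rw [hD, smul_smul, mul_inv_cancel₀ hN0, one_smul]
  have hDder : ∀ x y, D (B x y) = B (D x) y + B x (D y) := by
    intro x y
    simp only [hD, hjac α x y, smul_add, map_smul, LinearMap.smul_apply]
  have hDskew : ∀ x y, ⟪D x, y⟫ = -⟪x, D y⟫ := by
    intro x y
    simp only [hD, inner_smul_left, inner_smul_right, hskew α x y]
    simp
  have hDη : ∀ η ∈ t, ∀ x, B η (D x) = D (B η x) := by
    intro η hη x
    simp only [hD, map_smul]
    rw [hjac η α x, htab η hη α hαt]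
    simp
  have hσD : ∀ x, σ (D x) = - D (σ x) := by
    intro x
    simp only [hD, map_smul, hσaut, (htmp α hαt).1, map_neg, LinearMap.neg_apply, smul_neg]
  have hτD : ∀ x, τ (D x) = - D (τ x) := by
    intro x
    simp only [hD, map_smul, hτaut, (htmp α hαt).2, map_neg, LinearMap.neg_apply, smul_neg]
  have hmem : ∀ (k : ℝ) (y : g), y ∈ restrictedRootSpace B t (k • α) ↔
      ((∀ η ∈ t, B η y = ⟪α, η⟫ • D y) ∧ D (D y) = (-(k ^ 2)) • y) := by
    intro k y
    constructor
    · intro hy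
      have hy' : ∀ η ∈ t, B η (B η y) = (-(⟪k • α, η⟫ ^ 2)) • y := hy
      constructor
      · intro η hη
        have h0 : η - (⟪α, η⟫ * N⁻¹) • α ∈ t := t.sub_mem hη (t.smul_mem _ hαt)
        have h4 := hy' _ h0
        have h5 : ⟪k • α, η - (⟪α, η⟫ * N⁻¹) • α⟫ = 0 := by
          rw [inner_smul_left, inner_sub_right, inner_smul_right, ← hN]
          field_simp
          simp
        rw [h5] at h4
        have h6 : B (η - (⟪α, η⟫ * N⁻¹) • α) y = 0 := by
          rw [← inner_self_eq_zero (𝕜 := ℝ), hskew, h4]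
          simp
        rw [map_sub, map_smul, LinearMap.sub_apply, LinearMap.smul_apply, sub_eq_zero] at h6
        rw [h6, hD, smul_smul]
      · have h4 := hy' α hαt
        rw [inner_smul_left, ← hN] at h4
        rw [hD, hD, map_smul, h4, smul_smul, smul_smul]
        congr 1
        simp
        field_simp
    · rintro ⟨ha, hb⟩
      change ∀ η ∈ t, B η (B η y) = (-(⟪k • α, η⟫ ^ 2)) • y
      intro η hη
      rw [ha η hη, map_smul, hDη η hη, ha η hη, map_smul, hb, smul_smul, smul_smul,
        inner_smul_left]
      congr 1
      simp
      ring
  have hmem1 : ∀ y : g, y ∈ restrictedRootSpace B t α ↔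
      ((∀ η ∈ t, B η y = ⟪α, η⟫ • D y) ∧ D (D y) = -y) := by
    intro y
    have h := hmem 1 y
    simpa using h
  have hσsym : ∀ x y, ⟪σ x, y⟫ = ⟪x, σ y⟫ := by
    intro x y; rw [← hσort x (σ y), hσinv]
  have hτsym : ∀ x y, ⟪τ x, y⟫ = ⟪x, τ y⟫ := by
    intro x y; rw [← hτort x (τ y), hτinv]
  have hση : ∀ η ∈ t, ∀ x, B η (σ x) = - σ (B η x) := by
    intro η hη x
    rw [hσaut, (htmp η hη).1]; simp
  have hτη : ∀ η ∈ t, ∀ x, B η (τ x) = - τ (B η x) := by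
    intro η hη x
    rw [hτaut, (htmp η hη).2]; simp
  have hσV : ∀ x ∈ restrictedRootSpace B t α, σ x ∈ restrictedRootSpace B t α := by
    intro x hx
    rw [hmem1] at hx ⊢
    refine ⟨fun η hη => ?_, ?_⟩
    · rw [hση η hη, hx.1 η hη, map_smul, hσD]; simp
    · have : D (D (σ x)) = σ (D (D x)) := by rw [hσD, hσD]; simp
      rw [this, hx.2]; simp
  have hτV : ∀ x ∈ restrictedRootSpace B t α, τ x ∈ restrictedRootSpace B t α := by
    intro x hx
    rw [hmem1] at hx ⊢
    refine ⟨fun η hη => ?_, ?_⟩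
    · rw [hτη η hη, hx.1 η hη, map_smul, hτD]; simp
    · have : D (D (τ x)) = τ (D (D x)) := by rw [hτD, hτD]; simp
      rw [this, hx.2]; simp
  have hDV : ∀ x ∈ restrictedRootSpace B t α, D x ∈ restrictedRootSpace B t α := by
    intro x hx
    rw [hmem1] at hx ⊢
    refine ⟨fun η hη => ?_, ?_⟩
    · rw [hDη η hη, hx.1 η hη, map_smul]
    · rw [hx.2]; simp
  -- the σ-fixed part
  let W : Submodule ℝ g := restrictedRootSpace B t α ⊓ LinearMap.ker (σ - LinearMap.id)
  have hW : ∀ x, x ∈ W ↔ x ∈ restrictedRootSpace B t α ∧ σ x = x := by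
    intro x
    simp [W, Submodule.mem_inf, LinearMap.mem_ker, sub_eq_zero]
  obtain ⟨x0, hx0W, hx00⟩ : ∃ x0 ∈ W, x0 ≠ 0 := by
    obtain ⟨v, hv, hv0⟩ := Submodule.exists_mem_ne_zero_of_ne_bot h1
    by_cases hc : v + σ v = 0
    · have hs : σ v = -v := eq_neg_of_add_eq_zero_right hc
      refine ⟨D v, (hW _).2 ⟨hDV v hv, ?_⟩, ?_⟩
      · rw [hσD, hs]; simp
      · intro h
        have := ((hmem1 v).1 hv).2
        rw [h, map_zero] at this
        exact hv0 (neg_eq_zero.mp this.symm)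
    · refine ⟨v + σ v, (hW _).2 ⟨Submodule.add_mem _ hv (hσV v hv), ?_⟩, hc⟩
      rw [map_add, hσinv, add_comm]
  let T : g →ₗ[ℝ] g := σ ∘ₗ τ + τ ∘ₗ σ
  have hTa : ∀ x, T x = σ (τ x) + τ (σ x) := fun x => rfl
  let T' : g →ₗ[ℝ] g := D ∘ₗ (σ ∘ₗ τ - τ ∘ₗ σ)
  have hTa' : ∀ x, T' x = D (σ (τ x) - τ (σ x)) := fun x => rfl
  have hTsym : T.IsSymmetric := by
    intro x y
    rw [hTa, hTa, inner_add_left, inner_add_right, hσsym, hτsym, hτsym, hσsym, add_comm]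
  have hTsym' : T'.IsSymmetric := by
    intro x y
    rw [hTa', hTa', hDskew, inner_sub_left, hσsym, hτsym, hτsym, hσsym, hσD, hτD, map_neg,
      map_neg, hσD, hτD, map_sub, inner_sub_right]
    simp
  have hTW : ∀ x ∈ W, T x ∈ W := by
    intro x hx
    rw [hW] at hx ⊢
    refine ⟨Submodule.add_mem _ (hσV _ (hτV _ hx.1)) (hτV _ (hσV _ hx.1)), ?_⟩
    rw [hTa, map_add, hσinv, hx.2, add_comm]
  have hTW' : ∀ x ∈ W, T' x ∈ W := by
    intro x hx
    rw [hW] at hx ⊢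
    refine ⟨hDV _ (Submodule.sub_mem _ (hσV _ (hτV _ hx.1)) (hτV _ (hσV _ hx.1))), ?_⟩
    rw [hTa', hσD, map_sub, hσinv, hx.2, ← map_neg, neg_sub]
  obtain ⟨l, a0, ha0W, ha00, ha0T⟩ := aux_exists_eig T hTsym W hTW x0 hx0W hx00
  let W2 : Submodule ℝ g := W ⊓ LinearMap.ker (T - l • LinearMap.id)
  have hW2 : ∀ x, x ∈ W2 ↔ x ∈ W ∧ T x = l • x := by
    intro x
    simp [W2, Submodule.mem_inf, LinearMap.mem_ker, sub_eq_zero]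
  have hcomm : ∀ x, T (T' x) = T' (T x) := by
    intro x
    simp only [hTa, hTa', map_sub, map_add, hσD, hτD, map_neg, hσinv, hτinv, neg_neg]
    abel
  obtain ⟨μ, a, haW2, ha0, haT'⟩ := aux_exists_eig T' hTsym' W2 (by
    intro x hx
    rw [hW2] at hx ⊢
    exact ⟨hTW' x hx.1, by rw [hcomm, hx.2, map_smul]⟩) a0 ((hW2 _).2 ⟨ha0W, ha0T⟩) ha00
  obtain ⟨haW, haT⟩ := (hW2 a).1 haW2
  obtain ⟨haV, haσ⟩ := (hW a).1 haW
  obtain ⟨haη, haD⟩ := (hmem1 a).1 haV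
  rw [hTa, haσ] at haT
  rw [hTa', haσ] at haT'
  have hdif : σ (τ a) - τ a = -(μ • D a) := by
    have hm := ((hmem1 _).1 (Submodule.sub_mem _ (hσV _ (hτV _ haV)) (hτV _ haV))).2
    rw [haT', map_smul] at hm
    rw [hm, neg_neg]
  -- τ a = (l/2) a + (μ/2) D a
  have hτa : τ a = (l / 2) • a + (μ / 2) • D a := by
    have h : (2 : ℝ) • τ a = l • a + μ • D a := by
      rw [← haT, ← neg_neg (μ • D a), ← hdif, two_smul]; abel
    have h' : τ a = (2⁻¹ : ℝ) • ((2 : ℝ) • τ a) := by rw [smul_smul]; norm_num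
    rw [h', h]; module
  have hτDa : τ (D a) = (μ / 2) • a - (l / 2) • D a := by
    rw [hτD, hτa, map_add, map_smul, map_smul, haD]; module
  have hDD : ⟪D a, D a⟫ = ⟪a, a⟫ := by
    rw [hDskew, haD]; simp
  have haDa : ⟪a, D a⟫ = 0 := by
    have h := hDskew a a
    rw [real_inner_comm] at h
    linarith
  have hDaa : ⟪D a, a⟫ = 0 := by rw [real_inner_comm]; exact haDa
  have haa : ⟪a, a⟫ ≠ 0 := inner_self_ne_zero.mpr ha0
  have hnorm : (l / 2) ^ 2 + (μ / 2) ^ 2 = 1 := by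
    have h := hτort a a
    rw [hτa] at h
    simp only [inner_add_left, inner_add_right, real_inner_smul_left, real_inner_smul_right, hDD,
      haDa, hDaa] at h
    have h' : ((l / 2) ^ 2 + (μ / 2) ^ 2) * ⟪a, a⟫ = 1 * ⟪a, a⟫ := by linarith
    exact mul_right_cancel₀ haa h'
  have hht : B a (D a) ∈ t := by
    apply htmax
    · rw [hσaut, haσ, hσD, haσ, map_neg]
    · rw [hτaut, hτa, hτDa]
      simp only [map_add, map_sub, map_smul, LinearMap.add_apply, LinearMap.smul_apply, halt,
        hanti (D a) a]
      have h' : -(B a (D a)) = (-((l / 2) ^ 2 + (μ / 2) ^ 2)) • B a (D a) := by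
        rw [hnorm]; simp
      refine Eq.trans ?_ h'.symm
      module
    · intro η hη
      rw [hanti, hjac, haη η hη, hDη η hη, haη η hη, map_smul, map_smul, haD]
      simp [halt]
  have hh : B a (D a) = ⟪a, a⟫ • α := by
    have hd : B a (D a) - ⟪a, a⟫ • α ∈ t := t.sub_mem hht (t.smul_mem _ hαt)
    have key : ∀ η ∈ t, ⟪B a (D a) - ⟪a, a⟫ • α, η⟫ = 0 := by
      intro η hη
      rw [inner_sub_left, hinv, hanti, hDη η hη, haη η hη, map_smul, haD, real_inner_smul_left,
        inner_neg_right, real_inner_smul_right, inner_neg_right]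
      ring
    exact sub_eq_zero.mp (inner_self_eq_zero.mp (key _ hd))
  have hbr : ∀ y, B a (B (D a) y) - B (D a) (B a y) = (⟪a, a⟫ * N) • D y := by
    intro y
    rw [hjac a (D a) y, hh, map_smul, LinearMap.smul_apply, hBα, smul_smul]
    abel
  let Φ : g →ₗ[ℝ] g := B a - B (D a) ∘ₗ D
  have hΦ : ∀ v, Φ v = B a v - B (D a) (D v) := fun v => rfl
  let Ψ := Φ.domRestrict (restrictedRootSpace B t α)
  have hle : restrictedRootSpace B t ((2 : ℝ) • α) ≤ LinearMap.range Ψ := by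
    intro y hy
    obtain ⟨hyη, hyD⟩ := (hmem 2 y).1 hy
    obtain ⟨e, he⟩ : ∃ e, e = (1 / 2 : ℝ) • D y := ⟨_, rfl⟩
    have hDy : D y = (2 : ℝ) • e := by rw [he]; module
    have hDe : D e = (-2 : ℝ) • y := by rw [he, map_smul, hyD]; module
    have heη : ∀ η ∈ t, B η e = ⟪α, η⟫ • D e := by
      intro η hη
      rw [he, map_smul, map_smul, hDη η hη, hyη η hη, map_smul, smul_comm]
    have hDaη : ∀ η ∈ t, B η (D a) = ⟪α, η⟫ • D (D a) := by
      intro η hη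
      rw [hDη η hη, haη η hη, map_smul]
    -- eigen-behaviour is multiplicative
    have hprod : ∀ x z : g, (∀ η ∈ t, B η x = ⟪α, η⟫ • D x) →
        (∀ η ∈ t, B η z = ⟪α, η⟫ • D z) → ∀ η ∈ t, B η (B x z) = ⟪α, η⟫ • D (B x z) := by
      intro x z hx hz η hη
      rw [hjac, hx η hη, hz η hη, hDder, map_smul, map_smul, LinearMap.smul_apply, smul_add]
    have hz0 : B a y - B (D a) e = 0 := by
      have : B a y - B (D a) e ∈ restrictedRootSpace B t ((3 : ℝ) • α) := by
        rw [hmem]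
        refine ⟨fun η hη => ?_, ?_⟩
        · rw [map_sub, hprod a y haη hyη η hη, hprod (D a) e hDaη heη η hη, map_sub, smul_sub]
        · simp only [map_sub, map_add, hDder, hDy, hDe, haD, map_smul, map_neg,
            LinearMap.neg_apply]
          module
      rw [h3] at this
      simpa using this
    have hz1 : B a e + B (D a) y = 0 := by
      have h := congrArg D hz0
      simp only [map_sub, hDder, hDy, hDe, haD, map_smul, map_neg, map_zero,
            LinearMap.neg_apply] at h
      have h' : (3 : ℝ) • (B a e + B (D a) y) = 0 := by rw [← h]; module
      exact (smul_eq_zero.mp h').resolve_left (by norm_num)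
    have hDv : D (B a y + B (D a) e) = B a e - B (D a) y := by
      simp only [map_add, hDder, hDy, hDe, haD, map_smul, LinearMap.neg_apply, map_neg]
      module
    have hv : B a y + B (D a) e ∈ restrictedRootSpace B t α := by
      rw [hmem1]
      refine ⟨fun η hη => ?_, ?_⟩
      · rw [map_add, hprod a y haη hyη η hη, hprod (D a) e hDaη heη η hη, map_add, smul_add]
      · rw [hDv]
        simp only [map_sub, hDder, hDy, hDe, haD, map_smul, map_neg, LinearMap.neg_apply]
        module
    have hval : Φ (B a y + B (D a) e) = (-4 * (⟪a, a⟫ * N)) • y := by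
      rw [hΦ, hDv, sub_eq_zero.mp hz0, ← neg_eq_of_add_eq_zero_right hz1]
      have h := hbr e
      rw [hDe] at h
      have h' : (-4 * (⟪a, a⟫ * N)) • y = (2 : ℝ) • ((⟪a, a⟫ * N) • (-2 : ℝ) • y) := by module
      rw [h', ← h]
      simp only [map_add, map_sub, map_neg]
      module
    have hc : (-4 * (⟪a, a⟫ * N)) ≠ 0 := by simp [haa, hN0, ha0]
    refine ⟨(-4 * (⟪a, a⟫ * N))⁻¹ • ⟨_, hv⟩, ?_⟩
    rw [map_smul]
    change _ • Φ (B a y + B (D a) e) = y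
    rw [hval, smul_smul, inv_mul_cancel₀ hc, one_smul]
  have hker : 0 < Module.finrank ℝ (LinearMap.ker Ψ) := by
    rw [Module.finrank_pos_iff]
    refine ⟨⟨⟨⟨a, haV⟩, ?_⟩, 0, fun h => ha0 ?_⟩⟩
    · rw [LinearMap.mem_ker]
      change Φ a = 0
      rw [hΦ, halt, halt, sub_zero]
    · exact congrArg (fun z => (z.1.1 : g)) h
  have hsum := LinearMap.finrank_range_add_finrank_ker Ψ
  have hfl := Submodule.finrank_mono hle
  omega
end

section
/- Let V be a finite-dimensional real inner product space and M a finite multiset of vectors of V. Then M is negation-invariant if and only if for every ξ ∈ V the multiset of real numbers {⟨v,ξ⟩ : v ∈ M} (taken with multiplicities) is negation-invariant. -/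
open scoped RealInnerProductSpace

/-- A finite multiset `M` of vectors of a finite-dimensional real inner product space is
negation-invariant if and only if, for every `ξ`, the multiset of inner products
`⟨v, ξ⟩` (`v ∈ M`, with multiplicities) is negation-invariant. -/
theorem multiset_neg_invariant_iff_inner_neg_invariant
    {V : Type*} [NormedAddCommGroup V] [InnerProductSpace ℝ V] [FiniteDimensional ℝ V]
    (M : Multiset V) :
    M.map (fun v => -v) = M ↔
      ∀ ξ : V,
        (M.map (fun v => (⟪v, ξ⟫ : ℝ))).map (fun r => -r) =
          M.map (fun v => (⟪v, ξ⟫ : ℝ)) := by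
  constructor
  · intro h ξ
    conv_rhs => rw [← h]
    simp [Multiset.map_map, Function.comp_def]
  · intro h
    classical
    set A : Finset V := (M + M.map (fun v => -v)).toFinset with hA
    set D : Finset V := ((A ×ˢ A).image (fun p => p.1 - p.2)).erase 0 with hD
    set s : Finset (Submodule ℝ V) := D.image (fun d => (ℝ ∙ d)ᗮ) with hs
    have hne : ⋃ p ∈ s, (p : Set V) ≠ Set.univ := by
      apply Subspace.biUnion_ne_univ_of_top_notMem
      intro htop
      obtain ⟨d, hd, hdt⟩ := Finset.mem_image.1 htop
      have hd0 : d ≠ 0 := (Finset.mem_erase.1 hd).1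
      rw [Submodule.orthogonal_eq_top_iff, Submodule.span_singleton_eq_bot] at hdt
      exact hd0 hdt
    obtain ⟨ξ, hξ⟩ := (Set.ne_univ_iff_exists_notMem _).1 hne
    have hinj : Set.InjOn (fun v : V => (⟪v, ξ⟫ : ℝ)) (A : Set V) := by
      intro a ha b hb hab
      by_contra hn
      apply hξ
      refine Set.mem_iUnion₂.2 ⟨(ℝ ∙ (a - b))ᗮ, ?_, ?_⟩
      · refine Finset.mem_image_of_mem _ (Finset.mem_erase.2 ⟨sub_ne_zero.2 hn, ?_⟩)
        exact Finset.mem_image.2 ⟨(a, b), Finset.mem_product.2 ⟨ha, hb⟩, rfl⟩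
      · rw [SetLike.mem_coe, Submodule.mem_orthogonal_singleton_iff_inner_right, inner_sub_left]
        exact sub_eq_zero.2 hab
    have key : ∀ S : Multiset V, (∀ v ∈ S, v ∈ A) →
        (S.map (fun v : V => (⟪v, ξ⟫ : ℝ))).map
          (Function.invFunOn (fun v : V => (⟪v, ξ⟫ : ℝ)) (A : Set V)) = S := by
      intro S hS
      rw [Multiset.map_map]
      conv_rhs => rw [← Multiset.map_id S]
      exact Multiset.map_congr rfl fun v hv => hinj.leftInvOn_invFunOn (hS v hv)
    have e : (M.map (fun v => -v)).map (fun v : V => (⟪v, ξ⟫ : ℝ)) =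
        M.map (fun v : V => (⟪v, ξ⟫ : ℝ)) := by
      rw [← h ξ]
      simp [Multiset.map_map, Function.comp_def]
    rw [← key (M.map (fun v => -v)) (fun v hv => by
      rw [hA, Multiset.mem_toFinset]; exact Multiset.mem_add.2 (Or.inr hv)), e]
    exact key M (fun v hv => by
      rw [hA, Multiset.mem_toFinset]; exact Multiset.mem_add.2 (Or.inl hv))
end

section
/- Let V be a finite-dimensional real inner product space and Δ⁺ a finite set of nonzero vectors of V that is reduced in the sense that whenever α, α' ∈ Δ⁺ and α' = c·α for some real number c, then α' = α. For each α ∈ Δ⁺ let Θ_α be a finite multiset of real numbers none of whose elements is an integer multiple of π/2. Then the following are equivalent: (1) for every v ∈ V, the total number (with multiplicity) of pairs (α, θ) with α ∈ Δ⁺, θ ∈ Θ_α and (cot θ)·α = v equals the total number of such pairs with (cot θ)·α = −v; (2) for every nonzero v ∈ V, the total number (with multiplicity) of pairs (α, θ) with α ∈ Δ⁺, θ ∈ Θ_α for which there exists an integer m with (θ+mπ)⁻¹·α = v equals the total number of such pairs for which there exists an integer m with (θ+mπ)⁻¹·α = −v. -/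
open Real
open scoped Classical RealInnerProductSpace

theorem aux_key {θ x : ℝ} (h1 : Real.sin θ ≠ 0) (h2 : Real.sin x ≠ 0) :
    Real.cot θ = Real.cot x ↔ ∃ m : ℤ, θ + m * π = x := by
  have h : Real.cot θ = Real.cot x ↔ Real.sin (x - θ) = 0 := by
    rw [Real.cot_eq_cos_div_sin, Real.cot_eq_cos_div_sin, div_eq_div_iff h1 h2, Real.sin_sub]
    constructor <;> intro h <;> linarith
  rw [h, Real.sin_eq_zero_iff]
  constructor <;> rintro ⟨m, hm⟩ <;> exact ⟨m, by linarith⟩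

theorem aux_sin {θ : ℝ} (h : ∀ k : ℤ, θ ≠ k * (π / 2)) : Real.sin θ ≠ 0 := by
  intro h0
  obtain ⟨n, hn⟩ := Real.sin_eq_zero_iff.1 h0
  apply h (2 * n)
  push_cast
  linarith

theorem aux_cos {θ : ℝ} (h : ∀ k : ℤ, θ ≠ k * (π / 2)) : Real.cos θ ≠ 0 := by
  intro h0
  obtain ⟨n, hn⟩ := Real.cos_eq_zero_iff.1 h0
  apply h (2 * n + 1)
  push_cast
  linarith

theorem aux_cot {θ : ℝ} (h : ∀ k : ℤ, θ ≠ k * (π / 2)) : Real.cot θ ≠ 0 := by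
  rw [Real.cot_eq_cos_div_sin]
  exact div_ne_zero (aux_cos h) (aux_sin h)

theorem aux_cot_neg (x : ℝ) : Real.cot (-x) = - Real.cot x := by
  rw [Real.cot_eq_cos_div_sin, Real.cot_eq_cos_div_sin, Real.cos_neg, Real.sin_neg, div_neg]

theorem aux_shift {θ : ℝ} (h : ∀ k : ℤ, θ ≠ k * (π / 2)) (m : ℤ) :
    ∀ k : ℤ, θ + m * π ≠ k * (π / 2) := by
  intro k hk
  apply h (k - 2 * m)
  push_cast
  linarith

/-- relation in terms of the cotangent -/
theorem aux_iff {θ c : ℝ} (h : ∀ k : ℤ, θ ≠ k * (π / 2)) (hc : Real.cot c⁻¹ ≠ 0) :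
    (∃ m : ℤ, (θ + m * π)⁻¹ = c) ↔ Real.cot θ = Real.cot c⁻¹ := by
  have h2 : Real.sin c⁻¹ ≠ 0 := by
    intro h0
    apply hc
    rw [Real.cot_eq_cos_div_sin, h0, div_zero]
  rw [aux_key (aux_sin h) h2]
  simp only [inv_eq_iff_eq_inv]

theorem aux_iff0 {θ c : ℝ} (h : ∀ k : ℤ, θ ≠ k * (π / 2)) (hc : Real.cot c⁻¹ = 0) :
    ¬ (∃ m : ℤ, (θ + m * π)⁻¹ = c) := by
  rintro ⟨m, rfl⟩
  rw [inv_inv] at hc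
  exact aux_cot (aux_shift h m) hc

theorem aux_single (s : Multiset ℝ) (hs : ∀ θ ∈ s, ∀ k : ℤ, θ ≠ k * (π / 2)) :
    (∀ c : ℝ, c ≠ 0 → s.countP (fun θ => Real.cot θ = c) = s.countP (fun θ => Real.cot θ = -c)) ↔
    (∀ c : ℝ, c ≠ 0 → s.countP (fun θ => ∃ m : ℤ, (θ + m * π)⁻¹ = c) =
      s.countP (fun θ => ∃ m : ℤ, (θ + m * π)⁻¹ = -c)) := by
  have key : ∀ c : ℝ, Real.cot c⁻¹ ≠ 0 →
      s.countP (fun θ => ∃ m : ℤ, (θ + m * π)⁻¹ = c) =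
      s.countP (fun θ => Real.cot θ = Real.cot c⁻¹) := fun c hc =>
    Multiset.countP_congr rfl fun θ hθ => by
      exact propext (aux_iff (hs θ hθ) hc)
  have hn : ∀ c : ℝ, Real.cot (-c)⁻¹ = - Real.cot c⁻¹ := fun c => by
    rw [inv_neg, aux_cot_neg]
  constructor
  · intro H c _
    by_cases h0 : Real.cot c⁻¹ = 0
    · rw [Multiset.countP_eq_zero.2 fun θ hθ => aux_iff0 (hs θ hθ) h0,
        Multiset.countP_eq_zero.2 fun θ hθ => aux_iff0 (hs θ hθ) (by rw [hn, h0, neg_zero])]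
    · rw [key c h0, key (-c) (by rw [hn]; exact neg_ne_zero.2 h0), hn]
      exact H _ h0
  · intro H c hc
    have hx : Real.cot (Real.arctan c⁻¹) = c := by
      rw [Real.cot_eq_cos_div_sin, ← inv_div, ← Real.tan_eq_sin_div_cos, Real.tan_arctan, inv_inv]
    have h0 : Real.cot ((Real.arctan c⁻¹)⁻¹)⁻¹ = c := by rw [inv_inv, hx]
    have := H (Real.arctan c⁻¹)⁻¹ (inv_ne_zero (by simpa using hc))
    rw [key _ (by rwa [h0]), key _ (by rw [hn, h0]; exact neg_ne_zero.2 hc), hn, h0] at this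
    exact this

theorem aux_general {V : Type*} [NormedAddCommGroup V] [InnerProductSpace ℝ V]
    (Δ : Finset V) (hne : ∀ α ∈ Δ, α ≠ 0)
    (hred : ∀ α ∈ Δ, ∀ α' ∈ Δ, ∀ c : ℝ, α' = c • α → α' = α)
    (Θ : V → Multiset ℝ) (P : ℝ → ℝ → Prop) (Q : V → V → ℝ → Prop)
    (hQ : ∀ α v θ, Q α v θ ↔ ∃ c, P θ c ∧ c • α = v) :
    (∀ v : V, v ≠ 0 → (∑ α ∈ Δ, (Θ α).countP (fun θ => Q α v θ)) =
        ∑ α ∈ Δ, (Θ α).countP (fun θ => Q α (-v) θ)) ↔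
    ∀ α ∈ Δ, ∀ c : ℝ, c ≠ 0 → (Θ α).countP (fun θ => P θ c) =
      (Θ α).countP (fun θ => P θ (-c)) := by
  have hP : ∀ α ∈ Δ, ∀ c, (Θ α).countP (fun θ => Q α (c • α) θ) =
      (Θ α).countP (fun θ => P θ c) := by
    intro α hα c
    refine Multiset.countP_congr rfl fun θ _ => propext ?_
    rw [hQ]
    constructor
    · rintro ⟨d, hd, h⟩
      rwa [← smul_left_injective ℝ (hne α hα) h]
    · exact fun h => ⟨c, h, rfl⟩
  have hsum : ∀ α ∈ Δ, ∀ c : ℝ, c ≠ 0 → ∑ β ∈ Δ, (Θ β).countP (fun θ => Q β (c • α) θ) =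
      (Θ α).countP (fun θ => P θ c) := by
    intro α hα c hc
    rw [← hP α hα c]
    refine Finset.sum_eq_single_of_mem α hα fun β hβ hb => ?_
    refine Multiset.countP_eq_zero.2 fun θ _ h => ?_
    obtain ⟨d, -, hd⟩ := (hQ _ _ _).1 h
    apply hb
    refine (hred β hβ α hα (c⁻¹ * d) ?_).symm
    rw [mul_smul, hd, inv_smul_smul₀ hc]
  constructor
  · intro H α hα c hc
    have := H (c • α) (smul_ne_zero hc (hne α hα))
    rwa [hsum α hα c hc, ← neg_smul, hsum α hα (-c) (neg_ne_zero.2 hc)] at this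
  · intro H v hv
    refine Finset.sum_congr rfl fun α hα => ?_
    by_cases h : ∃ c : ℝ, c • α = v
    · obtain ⟨c, rfl⟩ := h
      have hc : c ≠ 0 := by
        rintro rfl
        simp at hv
      rw [hP α hα, ← neg_smul, hP α hα]
      exact H α hα c hc
    · rw [Multiset.countP_eq_zero.2, Multiset.countP_eq_zero.2]
      · intro θ _ hq
        obtain ⟨d, -, hd⟩ := (hQ _ _ _).1 hq
        exact h ⟨-d, by rw [neg_smul, hd, neg_neg]⟩
      · intro θ _ hq
        obtain ⟨d, -, hd⟩ := (hQ _ _ _).1 hq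
        exact h ⟨d, hd⟩

/-- Combinatorial core of Theorem 6.1 (Theorem I). Let `Δ` be a finite set of nonzero
vectors which is reduced (proportional members are equal), and for `α ∈ Δ` let `Θ α` be
a finite multiset of reals avoiding `(π/2)ℤ`. Then the multiset of vectors
`cot θ • α` (`α ∈ Δ`, `θ ∈ Θ α`) is symmetric under negation if and only if, for every
nonzero `v`, the number of pairs `(α, θ)` admitting an integer `m` with
`(θ+mπ)⁻¹ • α = v` equals the number of those with `(θ+mπ)⁻¹ • α = -v`. -/
theorem reduced_austere_iff_path_austere
    {V : Type*} [NormedAddCommGroup V] [InnerProductSpace ℝ V] [FiniteDimensional ℝ V]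
    (Δ : Finset V) (hne : ∀ α ∈ Δ, α ≠ 0)
    (hred : ∀ α ∈ Δ, ∀ α' ∈ Δ, ∀ c : ℝ, α' = c • α → α' = α)
    (Θ : V → Multiset ℝ)
    (hΘ : ∀ α ∈ Δ, ∀ θ ∈ Θ α, ∀ k : ℤ, θ ≠ k * (π / 2)) :
    ((∀ v : V,
        (∑ α ∈ Δ, (Θ α).countP (fun θ => Real.cot θ • α = v)) =
          ∑ α ∈ Δ, (Θ α).countP (fun θ => Real.cot θ • α = -v)) ↔
      (∀ v : V, v ≠ 0 →
        (∑ α ∈ Δ, (Θ α).countP (fun θ => ∃ m : ℤ, (θ + m * π)⁻¹ • α = v)) =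
          ∑ α ∈ Δ, (Θ α).countP (fun θ => ∃ m : ℤ, (θ + m * π)⁻¹ • α = -v))) := by
  have A := aux_general Δ hne hred Θ (fun θ c => Real.cot θ = c)
    (fun α v θ => Real.cot θ • α = v) (by intro α v θ; simp)
  have B := aux_general Δ hne hred Θ (fun θ c => ∃ m : ℤ, (θ + m * π)⁻¹ = c)
    (fun α v θ => ∃ m : ℤ, (θ + m * π)⁻¹ • α = v) (by
      intro α v θ
      constructor
      · rintro ⟨m, h⟩
        exact ⟨_, ⟨m, rfl⟩, h⟩
      · rintro ⟨_, ⟨m, rfl⟩, h⟩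
        exact ⟨m, h⟩)
  have C : (∀ v : V,
        (∑ α ∈ Δ, (Θ α).countP (fun θ => Real.cot θ • α = v)) =
          ∑ α ∈ Δ, (Θ α).countP (fun θ => Real.cot θ • α = -v)) ↔ (∀ v : V, v ≠ 0 →
        (∑ α ∈ Δ, (Θ α).countP (fun θ => Real.cot θ • α = v)) =
          ∑ α ∈ Δ, (Θ α).countP (fun θ => Real.cot θ • α = -v)) := by
    constructor
    · exact fun H v _ => H v
    · intro H v
      by_cases hv : v = 0
      · subst hv
        simp only [neg_zero]
      · exact H v hv
  rw [C]
  refine A.trans (Iff.trans ?_ B.symm)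
  exact forall₂_congr fun α hα => aux_single (Θ α) (hΘ α hα)
end

section
/- Let V be a finite-dimensional real inner product space and Δ⁺ a finite set of nonzero vectors of V such that whenever α, α' ∈ Δ⁺ and α' = c·α for some real number c, then c ∈ {1, 2, 1/2}. Let m : Δ⁺ → ℕ satisfy m(α) ≥ 1 for all α ∈ Δ⁺, and m(α) > m(2α) whenever both α and 2α lie in Δ⁺. Fix w ∈ V. Then the following are equivalent: (i) the finite multiset consisting of the vectors cot(⟨α,w⟩)·α, each taken with multiplicity m(α), over all α ∈ Δ⁺ with ⟨α,w⟩ ∉ πℤ, is negation-invariant; (ii) ⟨α,w⟩ ∈ (π/2)ℤ for every α ∈ Δ⁺; (iii) for every nonzero v ∈ V, the sum over α ∈ Δ⁺ with ⟨α,w⟩ ∉ πℤ of m(α) times the indicator of 'there exists an integer m with (⟨α,w⟩+mπ)⁻¹·α = v' equals the corresponding sum with v replaced by −v. -/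
open Real
open scoped Classical RealInnerProductSpace


lemma aux_half {x : ℝ} (h : sin x = 0 ∨ cos x = 0) : ∃ k : ℤ, x = k * (π / 2) := by
  rcases h with h | h
  · obtain ⟨n, hn⟩ := Real.sin_eq_zero_iff.1 h
    exact ⟨2 * n, by push_cast; linarith⟩
  · obtain ⟨n, hn⟩ := Real.cos_eq_zero_iff.1 h
    exact ⟨2 * n + 1, by push_cast; linarith⟩

lemma aux_odd {x : ℝ} (h : ∃ k : ℤ, x = k * (π / 2)) (h' : ¬ ∃ k : ℤ, x = k * π) :
    ∃ n : ℤ, x = (2 * n + 1) * (π / 2) := by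
  obtain ⟨k, hk⟩ := h
  rcases Int.even_or_odd' k with ⟨n, rfl | rfl⟩
  · exact absurd ⟨n, by rw [hk]; push_cast; ring⟩ h'
  · exact ⟨n, by rw [hk]; push_cast; ring⟩

lemma aux_min {V : Type*} [NormedAddCommGroup V] [InnerProductSpace ℝ V]
    (Δ : Finset V) (hne : ∀ α ∈ Δ, α ≠ 0)
    (hsc : ∀ α ∈ Δ, ∀ α' ∈ Δ, ∀ c : ℝ, α' = c • α → c = 1 ∨ c = 2 ∨ c = 1 / 2)
    (w : V)
    (h : ∀ α ∈ Δ, ((1 / 2 : ℝ) • α) ∉ Δ → ∃ k : ℤ, (⟪α, w⟫ : ℝ) = k * (π / 2)) :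
    ∀ α ∈ Δ, ∃ k : ℤ, (⟪α, w⟫ : ℝ) = k * (π / 2) := by
  intro α hα
  by_cases h2 : ((1 / 2 : ℝ) • α) ∈ Δ
  · obtain ⟨k, hk⟩ := h _ h2 (by
      intro h4
      have := hsc α hα _ h4 (1 / 4) (by rw [smul_smul]; norm_num)
      norm_num at this)
    rw [inner_smul_left] at hk
    refine ⟨2 * k, ?_⟩
    simp at hk
    push_cast
    linarith
  · exact h α hα h2

lemma aux_count {V : Type*} [NormedAddCommGroup V] [InnerProductSpace ℝ V]
    (Δ : Finset V)
    (hsc : ∀ α ∈ Δ, ∀ α' ∈ Δ, ∀ c : ℝ, α' = c • α → c = 1 ∨ c = 2 ∨ c = 1 / 2)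
    (m : V → ℕ) (hm : ∀ α ∈ Δ, 1 ≤ m α)
    (hmgt : ∀ α ∈ Δ, (2 : ℝ) • α ∈ Δ → m ((2 : ℝ) • α) < m α)
    (F : Finset V) (hF : F ⊆ Δ) (P Q : V → Prop) (α : V) (hα : α ∈ F)
    (h2 : ((1 / 2 : ℝ) • α) ∉ Δ) (hP : P α) (hQ : ¬ Q α)
    (hQs : ∀ β ∈ F, Q β → ∃ c : ℝ, β = c • α)
    (heq : ∑ β ∈ F, m β * (if P β then 1 else 0) = ∑ β ∈ F, m β * (if Q β then 1 else 0)) :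
    False := by
  have hlow : m α ≤ ∑ β ∈ F, m β * (if P β then 1 else 0) := by
    have := Finset.single_le_sum (f := fun β => m β * (if P β then 1 else 0))
      (fun _ _ => Nat.zero_le _) hα
    simpa [hP] using this
  have hQ2 : ∀ β ∈ F, Q β → β = (2 : ℝ) • α := by
    intro β hβ hq
    obtain ⟨c, hc⟩ := hQs β hβ hq
    rcases hsc α (hF hα) β (hF hβ) c hc with rfl | rfl | rfl
    · rw [one_smul] at hc
      exact absurd (hc ▸ hq) hQ
    · exact hc
    · exact absurd (hc ▸ hF hβ) h2
  have hup : ∑ β ∈ F, m β * (if Q β then 1 else 0) < m α := by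
    by_cases hd : (2 : ℝ) • α ∈ F
    · rw [Finset.sum_eq_single_of_mem _ hd]
      · refine lt_of_le_of_lt ?_ (hmgt α (hF hα) (hF hd))
        split_ifs <;> simp
      · intro β hβ hb
        rw [if_neg (fun hq => hb (hQ2 β hβ hq)), mul_zero]
    · rw [Finset.sum_eq_zero]
      · exact hm α (hF hα)
      · intro β hβ
        rw [if_neg (fun hq => hd (hQ2 β hβ hq ▸ hβ)), mul_zero]
  omega

/-- Combinatorial core of Theorem 7.2 (Theorem II(i)). With `Δ` a finite set of nonzero
vectors in which proportional members differ only by a factor `1`, `2` or `1/2`, and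
multiplicities `m : Δ → ℕ` with `m α ≥ 1` and `m α > m (2α)`, the following are
equivalent for `w`:
(i) the multiset of vectors `cot ⟨α,w⟩ • α` (each with multiplicity `m α`, over the
`α ∈ Δ` with `⟨α,w⟩ ∉ πℤ`) is negation-invariant;
(ii) `⟨α,w⟩ ∈ (π/2)ℤ` for every `α ∈ Δ`;
(iii) for every nonzero `v`, the `m`-weighted count of `α` (with `⟨α,w⟩ ∉ πℤ`) for which
some integer `k` gives `(⟨α,w⟩+kπ)⁻¹ • α = v` equals that for `-v`. -/
theorem sigma_eq_tau_austere_tfae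
    {V : Type*} [NormedAddCommGroup V] [InnerProductSpace ℝ V] [FiniteDimensional ℝ V]
    (Δ : Finset V) (hne : ∀ α ∈ Δ, α ≠ 0)
    (hsc : ∀ α ∈ Δ, ∀ α' ∈ Δ, ∀ c : ℝ, α' = c • α →
      c = 1 ∨ c = 2 ∨ c = 1 / 2)
    (m : V → ℕ) (hm : ∀ α ∈ Δ, 1 ≤ m α)
    (hmgt : ∀ α ∈ Δ, (2 : ℝ) • α ∈ Δ → m ((2 : ℝ) • α) < m α)
    (w : V) :
    (((∑ α ∈ Δ.filter (fun α => ¬ ∃ k : ℤ, (⟪α, w⟫ : ℝ) = k * π),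
          Multiset.replicate (m α) (Real.cot ⟪α, w⟫ • α)).map (fun v => -v) =
        ∑ α ∈ Δ.filter (fun α => ¬ ∃ k : ℤ, (⟪α, w⟫ : ℝ) = k * π),
          Multiset.replicate (m α) (Real.cot ⟪α, w⟫ • α)) ↔
      (∀ α ∈ Δ, ∃ k : ℤ, (⟪α, w⟫ : ℝ) = k * (π / 2))) ∧
    ((∀ α ∈ Δ, ∃ k : ℤ, (⟪α, w⟫ : ℝ) = k * (π / 2)) ↔
      (∀ v : V, v ≠ 0 →
        (∑ α ∈ Δ.filter (fun α => ¬ ∃ k : ℤ, (⟪α, w⟫ : ℝ) = k * π),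
            m α * (if ∃ k : ℤ, ((⟪α, w⟫ : ℝ) + k * π)⁻¹ • α = v then 1 else 0)) =
          ∑ α ∈ Δ.filter (fun α => ¬ ∃ k : ℤ, (⟪α, w⟫ : ℝ) = k * π),
            m α * (if ∃ k : ℤ, ((⟪α, w⟫ : ℝ) + k * π)⁻¹ • α = -v then 1 else 0))) := by
  have hnotpi : ∀ x : ℝ, (¬ ∃ k : ℤ, x = k * (π / 2)) → ¬ ∃ k : ℤ, x = k * π := by
    rintro x hx ⟨k, hk⟩
    exact hx ⟨2 * k, by push_cast; linarith⟩
  refine ⟨⟨?_, ?_⟩, ⟨?_, ?_⟩⟩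
  · intro h
    apply aux_min Δ hne hsc w
    intro α hα h2
    by_contra hx
    have hαF : α ∈ Δ.filter (fun α => ¬ ∃ k : ℤ, (⟪α, w⟫ : ℝ) = k * π) :=
      Finset.mem_filter.2 ⟨hα, hnotpi _ hx⟩
    have hcot : Real.cot ⟪α, w⟫ ≠ 0 := by
      rw [Real.cot_eq_cos_div_sin]
      intro h0
      exact hx (aux_half ((div_eq_zero_iff.1 h0).symm))
    have hv : Real.cot ⟪α, w⟫ • α ≠ 0 := smul_ne_zero hcot (hne α hα)
    refine aux_count Δ hsc m hm hmgt _ (Finset.filter_subset _ _)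
      (fun β => Real.cot ⟪β, w⟫ • β = Real.cot ⟪α, w⟫ • α)
      (fun β => Real.cot ⟪β, w⟫ • β = -(Real.cot ⟪α, w⟫ • α)) α hαF h2 rfl ?_ ?_ ?_
    · intro hq
      rw [← neg_smul] at hq
      have := smul_left_injective ℝ (hne α hα) hq
      exact hcot (by linarith)
    · intro β _ hq
      have hb : Real.cot ⟪β, w⟫ ≠ 0 := by
        intro h0
        rw [h0, zero_smul] at hq
        exact hv (neg_eq_zero.1 hq.symm)
      refine ⟨(Real.cot ⟪β, w⟫)⁻¹ * (-Real.cot ⟪α, w⟫), ?_⟩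
      rw [mul_smul, neg_smul, ← hq, inv_smul_smul₀ hb]
    · have hc := congrArg (Multiset.count (-(Real.cot ⟪α, w⟫ • α))) h
      rw [Multiset.count_map_eq_count' (fun v : V => -v) _ neg_injective] at hc
      simp only [Multiset.count_sum', Multiset.count_replicate] at hc
      simpa only [mul_ite, mul_one, mul_zero] using hc
  · intro h
    have h0 : ∀ α ∈ Δ.filter (fun α => ¬ ∃ k : ℤ, (⟪α, w⟫ : ℝ) = k * π),
        Multiset.replicate (m α) (Real.cot ⟪α, w⟫ • α) = m α • {(0 : V)} := by
      intro α hα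
      obtain ⟨h1, h2⟩ := Finset.mem_filter.1 hα
      obtain ⟨n, hn⟩ := aux_odd (h α h1) h2
      have : cos (⟪α, w⟫ : ℝ) = 0 := Real.cos_eq_zero_iff.2 ⟨n, by rw [hn]; ring⟩
      rw [Real.cot_eq_cos_div_sin, this, zero_div, zero_smul, Multiset.nsmul_singleton]
    rw [Finset.sum_congr rfl h0, ← Finset.sum_smul, Multiset.nsmul_singleton,
      Multiset.map_replicate, neg_zero]
  · intro h v hv
    refine Finset.sum_congr rfl ?_
    intro α hα
    obtain ⟨h1, h2⟩ := Finset.mem_filter.1 hα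
    obtain ⟨n, hn⟩ := aux_odd (h α h1) h2
    have key : ∀ u : V, (∃ k : ℤ, ((⟪α, w⟫ : ℝ) + k * π)⁻¹ • α = u) →
        ∃ k : ℤ, ((⟪α, w⟫ : ℝ) + k * π)⁻¹ • α = -u := by
      rintro u ⟨k, rfl⟩
      refine ⟨-k - (2 * n + 1), ?_⟩
      rw [← neg_smul, ← inv_neg]
      congr 2
      rw [hn]; push_cast; ring
    congr 1
    refine if_congr ⟨key v, fun hh => ?_⟩ rfl rfl
    simpa using key _ hh
  · intro h
    apply aux_min Δ hne hsc w
    intro α hα h2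
    by_contra hx
    have hαF : α ∈ Δ.filter (fun α => ¬ ∃ k : ℤ, (⟪α, w⟫ : ℝ) = k * π) :=
      Finset.mem_filter.2 ⟨hα, hnotpi _ hx⟩
    have hx0 : (⟪α, w⟫ : ℝ) ≠ 0 := fun h0 => hx ⟨0, by rw [h0]; simp⟩
    have hv : (⟪α, w⟫ : ℝ)⁻¹ • α ≠ 0 := smul_ne_zero (inv_ne_zero hx0) (hne α hα)
    refine aux_count Δ hsc m hm hmgt _ (Finset.filter_subset _ _)
      (fun β => ∃ k : ℤ, ((⟪β, w⟫ : ℝ) + k * π)⁻¹ • β = (⟪α, w⟫ : ℝ)⁻¹ • α)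
      (fun β => ∃ k : ℤ, ((⟪β, w⟫ : ℝ) + k * π)⁻¹ • β = -((⟪α, w⟫ : ℝ)⁻¹ • α))
      α hαF h2 ⟨0, by simp⟩ ?_ ?_ (h _ hv)
    · rintro ⟨k, hq⟩
      rw [← neg_smul, ← inv_neg] at hq
      have := inv_injective (smul_left_injective ℝ (hne α hα) hq)
      exact hx ⟨-k, by push_cast; linarith⟩
    · rintro β _ ⟨k, hq⟩
      have hb : ((⟪β, w⟫ : ℝ) + k * π)⁻¹ ≠ 0 := by
        intro h0
        rw [h0, zero_smul] at hq
        exact hv (neg_eq_zero.1 hq.symm)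
      refine ⟨(((⟪β, w⟫ : ℝ) + k * π)⁻¹)⁻¹ * (-(⟪α, w⟫ : ℝ)⁻¹), ?_⟩
      rw [mul_smul, neg_smul, ← hq, inv_smul_smul₀ hb]
end

section
/- Let V be a finite-dimensional real inner product space and Δ⁺ a finite set of nonzero vectors of V such that whenever α, α' ∈ Δ⁺ and α' = c·α for some real number c, then c ∈ {1, 2, 1/2}. Let m₊, m₋ : Δ⁺ → ℕ satisfy m₊(α)+m₋(α) ≥ 1 for all α ∈ Δ⁺, and m₊(α)+m₋(α) > m₊(2α)+m₋(2α) whenever both α and 2α lie in Δ⁺. Fix w ∈ V. For α ∈ Δ⁺ define a finite multiset Θ_α of real numbers as follows: if ⟨α,w⟩ ∈ (π/2)ℤ then Θ_α is empty; otherwise Θ_α contains ⟨α,w⟩ with multiplicity m₊(α) and ⟨α,w⟩+π/2 with multiplicity m₋(α). Assume that the multiset of vectors {cot(θ)·α : α ∈ Δ⁺, θ ∈ Θ_α} (with multiplicities) is negation-invariant. Then for every nonzero v ∈ V, the total number (with multiplicity) of pairs (α,θ) with α ∈ Δ⁺, θ ∈ Θ_α for which there exists an integer m with (θ+mπ)⁻¹·α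 = v equals the total number of such pairs for which there exists an integer m with (θ+mπ)⁻¹·α = −v. -/
open Real
open scoped Classical RealInnerProductSpace

/-- The multiset of "angles" attached to a root `α` in the commuting case: empty when
`⟨α,w⟩ ∈ (π/2)ℤ`; otherwise `⟨α,w⟩` with multiplicity `m₊ α` together with
`⟨α,w⟩ + π/2` with multiplicity `m₋ α`. -/
noncomputable def commutingAngles {V : Type*} [NormedAddCommGroup V]
    [InnerProductSpace ℝ V] (mp mm : V → ℕ) (w α : V) : Multiset ℝ :=
  if ∃ k : ℤ, (⟪α, w⟫ : ℝ) = k * (π / 2) then 0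
  else Multiset.replicate (mp α) (⟪α, w⟫ : ℝ) +
    Multiset.replicate (mm α) ((⟪α, w⟫ : ℝ) + π / 2)

lemma bad_iff (y : ℝ) : (∃ k : ℤ, y = k * (π / 2)) ↔ (sin y = 0 ∨ cos y = 0) := by
  have h : (sin y = 0 ∨ cos y = 0) ↔ sin (2 * y) = 0 := by
    rw [sin_two_mul]; simp
  rw [h, Real.sin_eq_zero_iff]
  constructor
  · rintro ⟨k, hk⟩; exact ⟨k, by rw [hk]; ring⟩
  · rintro ⟨k, hk⟩; exact ⟨k, by linarith⟩

lemma cot_shift (y : ℝ) : Real.cot (y + π / 2) = -(Real.cot y)⁻¹ := by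
  rw [Real.cot_eq_cos_div_sin, Real.cot_eq_cos_div_sin, cos_add_pi_div_two, sin_add_pi_div_two,
    inv_div, neg_div]

lemma cot_double (y : ℝ) (hs : sin y ≠ 0) (hc : cos y ≠ 0) :
    2 * Real.cot (2 * y) = Real.cot y - (Real.cot y)⁻¹ := by
  rw [Real.cot_eq_cos_div_sin, Real.cot_eq_cos_div_sin, cos_two_mul', sin_two_mul]
  field_simp

lemma arith (c : ℝ) (hc : c ≠ 0) (p m p' m' : ℕ) (hlt : p' + m' < p + m)
    (h1 : c ^ 2 = 1 → p' = 0 ∧ m' = 0)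
    (hN : ∀ s : ℝ, s ≠ 0 →
      (if c = s then p else 0) + (if -c⁻¹ = s then m else 0) +
      ((if c - c⁻¹ = s then p' else 0) + (if -4 * (c - c⁻¹)⁻¹ = s then m' else 0)) =
      (if c = -s then p else 0) + (if -c⁻¹ = -s then m else 0) +
      ((if c - c⁻¹ = -s then p' else 0) + (if -4 * (c - c⁻¹)⁻¹ = -s then m' else 0))) :
    c ^ 2 = 1 ∧ p = m := by
  have A := hN c hc
  have B := hN (-c⁻¹) (by simpa using hc)
  have e1 : c ≠ -c := fun h => hc (by linarith)
  have e2 : -c⁻¹ ≠ c⁻¹ := fun h => (inv_ne_zero hc) (by linarith)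
  have e4 : -c⁻¹ ≠ c := fun h => by
    have : c ^ 2 = -1 := by field_simp at h; linarith
    nlinarith [sq_nonneg c]
  by_cases hc2 : c ^ 2 = 1
  · obtain ⟨rfl, rfl⟩ := h1 hc2
    have e3 : c⁻¹ = c := by field_simp; linarith
    refine ⟨hc2, ?_⟩
    simp only [e3] at A e4
    simp [e1, e4] at A
    exact A
  · exfalso
    have e3 : c⁻¹ ≠ c := fun h => hc2 (by field_simp at h; linarith)
    have e3' : c ≠ c⁻¹ := e3.symm
    have d : c ^ 2 - 1 ≠ 0 := fun h => hc2 (by linarith)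
    have e5 : c ≠ -c⁻¹ := e4.symm
    have hA : c - c⁻¹ = -c → c ^ 2 = 1 / 2 := fun h => by field_simp at h; linarith
    have hd : (c - c⁻¹)⁻¹ = c / (c ^ 2 - 1) := by
      rw [show c - c⁻¹ = (c ^ 2 - 1) / c by field_simp, inv_div]
    have hA' : -4 * (c - c⁻¹)⁻¹ = -c → c ^ 2 = 5 := fun h => by
      rw [hd] at h; field_simp at h; linarith
    have hB : c - c⁻¹ = c⁻¹ → c ^ 2 = 2 := fun h => by field_simp at h; linarith
    have hB' : -4 * (c - c⁻¹)⁻¹ = c⁻¹ → c ^ 2 = 1 / 5 := fun h => by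
      rw [hd] at h; field_simp at h; linarith
    simp only [neg_neg, neg_inj, e1, e2, e3, e3', e4, e5, if_true, if_false] at A B
    have P : p = 0 ∨ c ^ 2 = 1 / 2 ∨ c ^ 2 = 5 := by
      by_contra! h
      rw [if_neg (fun t => h.2.1 (hA t)), if_neg (fun t => h.2.2 (hA' t))] at A
      omega
    have M : m = 0 ∨ c ^ 2 = 2 ∨ c ^ 2 = 1 / 5 := by
      by_contra! h
      rw [if_neg (fun t => h.2.1 (hB t)), if_neg (fun t => h.2.2 (hB' t))] at B
      omega
    have : p = 0 ∨ m = 0 := by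
      rcases P with P | P | P
      · exact Or.inl P
      all_goals
        rcases M with M | M | M
        · exact Or.inr M
        all_goals (exfalso; rw [P] at M; norm_num at M)
    have Ale : p ≤ p' + m' := by split_ifs at A <;> omega
    have Ble : m ≤ p' + m' := by split_ifs at B <;> omega
    omega

lemma count_angles {V : Type*} [NormedAddCommGroup V] [InnerProductSpace ℝ V]
    (mp mm : V → ℕ) (w β u : V)
    (hb : ¬ ∃ k : ℤ, (⟪β, w⟫ : ℝ) = k * (π / 2)) :
    ((commutingAngles mp mm w β).map (fun θ => Real.cot θ • β)).count u =
      (if Real.cot ⟪β, w⟫ • β = u then mp β else 0) +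
      (if (-(Real.cot ⟪β, w⟫)⁻¹) • β = u then mm β else 0) := by
  rw [commutingAngles, if_neg hb, Multiset.map_add, Multiset.map_replicate,
    Multiset.map_replicate, Multiset.count_add, Multiset.count_replicate,
    Multiset.count_replicate, cot_shift]

lemma key {V : Type*} [NormedAddCommGroup V] [InnerProductSpace ℝ V]
    (Δ : Finset V) (hne : ∀ α ∈ Δ, α ≠ 0)
    (hsc : ∀ α ∈ Δ, ∀ α' ∈ Δ, ∀ c : ℝ, α' = c • α →
      c = 1 ∨ c = 2 ∨ c = 1 / 2)
    (mp mm : V → ℕ) (hm : ∀ α ∈ Δ, 1 ≤ mp α + mm α)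
    (hmgt : ∀ α ∈ Δ, (2 : ℝ) • α ∈ Δ →
      mp ((2 : ℝ) • α) + mm ((2 : ℝ) • α) < mp α + mm α)
    (w : V)
    (haustere :
      (∑ α ∈ Δ, (commutingAngles mp mm w α).map (fun θ => Real.cot θ • α)).map
          (fun v => -v) =
        ∑ α ∈ Δ, (commutingAngles mp mm w α).map (fun θ => Real.cot θ • α))
    (α : V) (hα : α ∈ Δ) (hhalf : (1 / 2 : ℝ) • α ∉ Δ)
    (hb : ¬ ∃ k : ℤ, (⟪α, w⟫ : ℝ) = k * (π / 2)) :
    cos (2 * (⟪α, w⟫ : ℝ)) = 0 ∧ mp α = mm α := by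
  set S := ∑ α ∈ Δ, (commutingAngles mp mm w α).map (fun θ => Real.cot θ • α) with hS
  have hα0 := hne α hα
  have hb' := hb
  rw [bad_iff] at hb'
  push Not at hb'
  obtain ⟨hsin, hcos⟩ := hb'
  set x : ℝ := ⟪α, w⟫ with hx
  have hneg : ∀ u, S.count (-u) = S.count u := by
    intro u
    conv_lhs => rw [← haustere]
    exact Multiset.count_map_eq_count' _ _ neg_injective u
  have hinj : ∀ a b : ℝ, a • α = b • α ↔ a = b := fun a b =>
    (smul_left_injective ℝ hα0).eq_iff
  have h2x : (⟪(2 : ℝ) • α, w⟫ : ℝ) = 2 * x := by rw [real_inner_smul_left]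
  have hc0 : Real.cot x ≠ 0 := by
    rw [Real.cot_eq_cos_div_sin]; exact div_ne_zero hcos hsin
  have hcsq : cos (2 * x) = 0 ↔ Real.cot x ^ 2 = 1 := by
    rw [Real.cot_eq_cos_div_sin, cos_two_mul', div_pow, div_eq_one_iff_eq (pow_ne_zero 2 hsin),
      sub_eq_zero]
  have h2ne : (2 : ℝ) • α ≠ α := fun h => by
    have := (hinj 2 1).1 (by simpa using h)
    norm_num at this
  set Q : Prop := (2 : ℝ) • α ∈ Δ ∧ cos (2 * x) ≠ 0 with hQ
  have hcount : ∀ s : ℝ, s ≠ 0 → S.count (s • α) =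
      (if Real.cot x = s then mp α else 0) + (if -(Real.cot x)⁻¹ = s then mm α else 0) +
      ((if Real.cot x - (Real.cot x)⁻¹ = s then (if Q then mp ((2 : ℝ) • α) else 0) else 0) +
       (if -4 * (Real.cot x - (Real.cot x)⁻¹)⁻¹ = s then
          (if Q then mm ((2 : ℝ) • α) else 0) else 0)) := by
    intro s hs
    rw [hS, Multiset.count_sum', ← Finset.add_sum_erase _ _ hα,
      count_angles mp mm w α _ hb, ← hx]
    simp only [hinj]
    congr 1
    have hz : ∀ β ∈ Δ.erase α,
        ((commutingAngles mp mm w β).map (fun θ => Real.cot θ • β)).count (s • α) =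
        if β = (2 : ℝ) • α then
          ((commutingAngles mp mm w ((2 : ℝ) • α)).map
            (fun θ => Real.cot θ • ((2 : ℝ) • α))).count (s • α) else 0 := by
      intro β hβ
      rw [Finset.mem_erase] at hβ
      split_ifs with h
      · rw [h]
      · rw [Multiset.count_eq_zero]
        intro hmem
        rw [Multiset.mem_map] at hmem
        obtain ⟨θ, -, hθ⟩ := hmem
        have ht : Real.cot θ ≠ 0 := fun h0 => by
          rw [h0, zero_smul] at hθ
          exact (smul_ne_zero hs hα0) hθ.symm
        have hβe : β = ((Real.cot θ)⁻¹ * s) • α := by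
          rw [mul_smul, ← hθ, inv_smul_smul₀ ht]
        rcases hsc α hα β hβ.2 _ hβe with h' | h' | h' <;> rw [h'] at hβe
        · exact hβ.1 (by simpa using hβe)
        · exact h hβe
        · exact hhalf (hβe ▸ hβ.2)
    rw [Finset.sum_congr rfl hz, Finset.sum_ite_eq']
    have hsin2 : sin (2 * x) ≠ 0 := by
      rw [sin_two_mul]; exact mul_ne_zero (mul_ne_zero two_ne_zero hsin) hcos
    by_cases hq : Q
    · have hb2 : ¬ ∃ k : ℤ, (⟪(2 : ℝ) • α, w⟫ : ℝ) = k * (π / 2) := by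
        rw [bad_iff, h2x]; exact fun h => h.elim hsin2 hq.2
      rw [if_pos (Finset.mem_erase.2 ⟨h2ne, hq.1⟩), count_angles mp mm w _ _ hb2, h2x]
      simp only [smul_smul, hinj, if_pos hq]
      rw [← cot_double x hsin hcos, mul_comm (Real.cot (2 * x)) 2,
        show -(Real.cot (2 * x))⁻¹ * 2 = -4 * (2 * Real.cot (2 * x))⁻¹ by
          rw [mul_inv]; ring]
    · simp only [if_neg hq, ite_self, add_zero]
      split_ifs with h
      · have hc2 : cos (2 * x) = 0 := by
          by_contra h0
          exact hq ⟨(Finset.mem_erase.1 h).2, h0⟩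
        have hb2 : ∃ k : ℤ, (⟪(2 : ℝ) • α, w⟫ : ℝ) = k * (π / 2) := by
          rw [bad_iff, h2x]; exact Or.inr hc2
        rw [commutingAngles, if_pos hb2]
        simp
      · rfl
  rw [hcsq]
  refine arith (Real.cot x) hc0 (mp α) (mm α) (if Q then mp ((2 : ℝ) • α) else 0)
    (if Q then mm ((2 : ℝ) • α) else 0) ?_ ?_ ?_
  · split_ifs with hq
    · exact hmgt α hα hq.1
    · have := hm α hα
      omega
  · intro h
    have hq : ¬ Q := fun hq => hq.2 (hcsq.2 h)
    simp [hq]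
  · intro s hs
    rw [← hcount s hs, ← hcount (-s) (neg_ne_zero.2 hs), neg_smul, hneg]

lemma countP_repl (P : ℝ → Prop) (n : ℕ) (a : ℝ) :
    (Multiset.replicate n a).countP P = if P a then n else 0 := by
  induction n with
  | zero => simp
  | succ n ih =>
    rw [Multiset.replicate_succ, Multiset.countP_cons, ih]
    split_ifs <;> simp

lemma flip_iff {V : Type*} [NormedAddCommGroup V] [InnerProductSpace ℝ V] (x : ℝ) (α v : V)
    (h : cos (2 * x) = 0) :
    (∃ m : ℤ, (x + m * π)⁻¹ • α = v) ↔ (∃ m : ℤ, (x + π / 2 + m * π)⁻¹ • α = -v) := by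
  rw [Real.cos_eq_zero_iff] at h
  obtain ⟨k, hk⟩ := h
  constructor
  · rintro ⟨m, rfl⟩
    refine ⟨-(k + 1) - m, ?_⟩
    rw [← neg_smul, ← inv_neg]
    congr 2
    push_cast
    linarith
  · rintro ⟨m, hm⟩
    refine ⟨-(k + 1) - m, ?_⟩
    rw [← neg_neg v, ← hm, ← neg_smul, ← inv_neg]
    congr 2
    push_cast
    linarith

/-- Combinatorial core of Theorem 7.4 (Theorem II(ii)): in the commuting case, if the
multiset of vectors `cot θ • α` (`α ∈ Δ`, `θ ∈ Θ_α`) is negation-invariant, then for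
every nonzero `v` the count of pairs `(α, θ)` admitting an integer `m` with
`(θ+mπ)⁻¹ • α = v` equals the count of those with `(θ+mπ)⁻¹ • α = -v`. -/
theorem commuting_austere_implies_path_austere
    {V : Type*} [NormedAddCommGroup V] [InnerProductSpace ℝ V] [FiniteDimensional ℝ V]
    (Δ : Finset V) (hne : ∀ α ∈ Δ, α ≠ 0)
    (hsc : ∀ α ∈ Δ, ∀ α' ∈ Δ, ∀ c : ℝ, α' = c • α →
      c = 1 ∨ c = 2 ∨ c = 1 / 2)
    (mp mm : V → ℕ) (hm : ∀ α ∈ Δ, 1 ≤ mp α + mm α)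
    (hmgt : ∀ α ∈ Δ, (2 : ℝ) • α ∈ Δ →
      mp ((2 : ℝ) • α) + mm ((2 : ℝ) • α) < mp α + mm α)
    (w : V)
    (haustere :
      (∑ α ∈ Δ, (commutingAngles mp mm w α).map (fun θ => Real.cot θ • α)).map
          (fun v => -v) =
        ∑ α ∈ Δ, (commutingAngles mp mm w α).map (fun θ => Real.cot θ • α)) :
    ∀ v : V, v ≠ 0 →
      (∑ α ∈ Δ, (commutingAngles mp mm w α).countP
          (fun θ => ∃ m : ℤ, (θ + m * π)⁻¹ • α = v)) =
        ∑ α ∈ Δ, (commutingAngles mp mm w α).countP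
          (fun θ => ∃ m : ℤ, (θ + m * π)⁻¹ • α = -v) := by
  intro v _
  refine Finset.sum_congr rfl fun α hα => ?_
  by_cases hb : ∃ k : ℤ, (⟪α, w⟫ : ℝ) = k * (π / 2)
  · simp [commutingAngles, if_pos hb]
  have hmain : cos (2 * (⟪α, w⟫ : ℝ)) = 0 ∧ mp α = mm α := by
    by_cases hhalf : (1 / 2 : ℝ) • α ∈ Δ
    · exfalso
      set β := (1 / 2 : ℝ) • α with hβ
      have hαβ : α = (2 : ℝ) • β := by rw [hβ, smul_smul]; norm_num
      have hi : (⟪α, w⟫ : ℝ) = 2 * ⟪β, w⟫ := by rw [hαβ, real_inner_smul_left]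
      have hq : (1 / 2 : ℝ) • β ∉ Δ := fun h => by
        have := hsc α hα _ h (1 / 4) (by rw [hβ, smul_smul]; norm_num)
        norm_num at this
      have hbβ : ¬ ∃ k : ℤ, (⟪β, w⟫ : ℝ) = k * (π / 2) := by
        rintro ⟨k, hk⟩
        exact hb ⟨2 * k, by rw [hi, hk]; push_cast; ring⟩
      have := (key Δ hne hsc mp mm hm hmgt w haustere β hhalf hq hbβ).1
      rw [← hi] at this
      exact hb ((bad_iff _).2 (Or.inr this))
    · exact key Δ hne hsc mp mm hm hmgt w haustere α hα hhalf hb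
  obtain ⟨hc, hpm⟩ := hmain
  have h1 := flip_iff _ α v hc
  have h2 := flip_iff _ α (-v) hc
  rw [neg_neg] at h2
  rw [commutingAngles, if_neg hb]
  simp only [Multiset.countP_add, countP_repl, h1, h2, hpm]
  exact add_comm _ _
end

section
/- Let p > q ≥ 1 be integers and let e_1, …, e_q denote the standard orthonormal basis of Euclidean space ℝ^q. The finite multiset M of vectors of ℝ^q consisting of: −(√2+1)·e_i with multiplicity p−q for each 1 ≤ i ≤ q; −(e_i+e_j) with multiplicity 1 for each 1 ≤ i < j ≤ q; 2·e_i with multiplicity 1 for each i; (√2−1)·e_i with multiplicity p−q for each i; e_i+e_j with multiplicity 1 for each i < j; and the zero vector with multiplicity 1 for each pair i < j, is NOT negation-invariant. -/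
open Real

/-- The multiset of principal curvature vectors of the Hermann orbit
`N = SO(p+q)·(exp w)K` in `SU(p+q)/S(U(p)×U(q))` with `w = (π/8)(e₁+⋯+e_q)`
(Section 8 of the paper) is not negation-invariant, i.e. the orbit is not austere. -/
theorem hermann_orbit_not_austere (p q : ℕ) (hq : 1 ≤ q) (hpq : q < p) :
    let e : Fin q → EuclideanSpace ℝ (Fin q) := fun i => EuclideanSpace.single i 1
    let M : Multiset (EuclideanSpace ℝ (Fin q)) :=
      (∑ i : Fin q, Multiset.replicate (p - q) ((-(Real.sqrt 2 + 1)) • e i)) +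
      (∑ i : Fin q, ∑ j ∈ Finset.univ.filter (fun j => i < j), {-(e i + e j)}) +
      (∑ i : Fin q, {(2 : ℝ) • e i}) +
      (∑ i : Fin q, Multiset.replicate (p - q) ((Real.sqrt 2 - 1) • e i)) +
      (∑ i : Fin q, ∑ j ∈ Finset.univ.filter (fun j => i < j), {e i + e j}) +
      (∑ i : Fin q, ∑ j ∈ Finset.univ.filter (fun j => i < j),
        ({0} : Multiset (EuclideanSpace ℝ (Fin q))))
    M.map (fun v => -v) ≠ M := by
  intro e M h
  have hs : Real.sqrt 2 * Real.sqrt 2 = 2 := Real.mul_self_sqrt (by norm_num)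
  have hs0 : 0 ≤ Real.sqrt 2 := Real.sqrt_nonneg 2
  let k : Fin q := ⟨0, hq⟩
  have h2 : (2 : ℝ) • e k ∈ M := by
    simp only [M, Multiset.mem_add, Multiset.mem_sum]
    exact Or.inl (Or.inl (Or.inl (Or.inr ⟨k, Finset.mem_univ _, Multiset.mem_singleton_self _⟩)))
  have h3 : -((2 : ℝ) • e k) ∈ M := by
    rw [← h]
    exact Multiset.mem_map_of_mem (fun v => -v) h2
  have hek : e k k = 1 := by simp [e]
  have he : ∀ i, e i k = if k = i then 1 else 0 := by
    intro i
    simp [e, Pi.single_apply]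
  simp only [M, Multiset.mem_add, Multiset.mem_sum, Multiset.mem_singleton,
    Finset.mem_filter, Finset.mem_univ, true_and] at h3
  rcases h3 with ((((⟨i, h3⟩ | ⟨i, j, hij, h3⟩) | ⟨i, h3⟩) | ⟨i, h3⟩) | ⟨i, j, hij, h3⟩) | ⟨i, j, hij, h3⟩
  all_goals try replace h3 := Multiset.eq_of_mem_replicate h3
  all_goals
    have h4 := congrArg (fun v : EuclideanSpace ℝ (Fin q) => v k) h3
    simp only [PiLp.neg_apply, PiLp.smul_apply, PiLp.add_apply, PiLp.zero_apply, smul_eq_mul, he] at h4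
    try have hne := hij.ne
    split_ifs at h4 <;> first | nlinarith | (exfalso; simp_all; done)
end

section
/- Let p > q ≥ 1 be integers and let e_1, …, e_q denote the standard orthonormal basis of Euclidean space ℝ^q. For a nonzero vector v ∈ ℝ^q define the (finite) count c(v) := (p−q)·#{(i,m) ∈ {1,…,q}×ℤ : v = −(π/8+mπ)⁻¹·e_i} + #{(i,j,m) : 1 ≤ i < j ≤ q, m ∈ ℤ, v = −(π/4+mπ)⁻¹·(e_i+e_j)} + #{(i,m) : v = −(3π/4+mπ)⁻¹·2e_i} + (p−q)·#{(i,m) : v = −(5π/8+mπ)⁻¹·e_i} + #{(i,j,m) : i < j, v = −(3π/4+mπ)⁻¹·(e_i+e_j)} + #{(i,j,m) : i < j, v = −(π/2+mπ)⁻¹·(e_i−e_j)} + #{(i,j,n) : i < j, n ∈ ℤ∖{0}, v = (nπ)⁻¹·(e_i−e_j)}. Then c(v) = c(−v) holds for every nonzero v ∈ ℝ^q if and only if p = q+1. -/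
open Real

/-- Standard orthonormal basis vector `e_i` of `ℝ^q`. -/
noncomputable def stdVec (q : ℕ) (i : Fin q) : EuclideanSpace ℝ (Fin q) :=
  EuclideanSpace.single i 1

/-- The multiplicity `c(v)` of the nonzero principal curvature vector `v` of the orbit
`P(G,H×K)∗ŵ` of Section 8 of the paper (`G = SU(p+q)`, `K = S(U(p)×U(q))`,
`H = SO(p+q)`, `w = (π/8)(e₁+⋯+e_q)`). -/
noncomputable def pathOrbitCurvatureCount (p q : ℕ)
    (v : EuclideanSpace ℝ (Fin q)) : ℕ :=
  (p - q) * Set.ncard {x : Fin q × ℤ |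
      v = (-(π / 8 + x.2 * π)⁻¹) • stdVec q x.1} +
  Set.ncard {x : Fin q × Fin q × ℤ | x.1 < x.2.1 ∧
      v = (-(π / 4 + x.2.2 * π)⁻¹) • (stdVec q x.1 + stdVec q x.2.1)} +
  Set.ncard {x : Fin q × ℤ |
      v = (-(3 * π / 4 + x.2 * π)⁻¹) • ((2 : ℝ) • stdVec q x.1)} +
  (p - q) * Set.ncard {x : Fin q × ℤ |
      v = (-(5 * π / 8 + x.2 * π)⁻¹) • stdVec q x.1} +
  Set.ncard {x : Fin q × Fin q × ℤ | x.1 < x.2.1 ∧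
      v = (-(3 * π / 4 + x.2.2 * π)⁻¹) • (stdVec q x.1 + stdVec q x.2.1)} +
  Set.ncard {x : Fin q × Fin q × ℤ | x.1 < x.2.1 ∧
      v = (-(π / 2 + x.2.2 * π)⁻¹) • (stdVec q x.1 - stdVec q x.2.1)} +
  Set.ncard {x : Fin q × Fin q × ℤ | x.1 < x.2.1 ∧ x.2.2 ≠ 0 ∧
      v = ((x.2.2 * π)⁻¹ : ℝ) • (stdVec q x.1 - stdVec q x.2.1)}

lemma smul_std_inj {q : ℕ} {i j : Fin q} {a b : ℝ} (ha : a ≠ 0)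
    (h : a • stdVec q i = b • stdVec q j) : i = j ∧ a = b := by
  have h1 := congrArg (fun w : EuclideanSpace ℝ (Fin q) => w i) h
  by_cases hij : i = j
  · subst hij
    refine ⟨rfl, ?_⟩
    simpa [stdVec] using h1
  · exfalso
    simp [stdVec, hij] at h1
    exact ha h1

lemma quarter_ne (k n : ℤ) (hk : ¬ n ∣ k) (hn : n ≠ 0) (m : ℤ) :
    (k : ℝ) * π / n + m * π ≠ 0 := by
  intro h
  have hn' : (n : ℝ) ≠ 0 := by exact_mod_cast hn
  have h2 : ((k : ℝ) + m * n) * π = 0 := by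
    field_simp at h
    linarith
  have h3 : (k : ℝ) + m * n = 0 := by
    rcases mul_eq_zero.1 h2 with h | h
    · exact h
    · exact absurd h pi_ne_zero
  have h4 : k + m * n = 0 := by exact_mod_cast h3
  exact hk ⟨-m, by linarith⟩

lemma ne18 (m : ℤ) : π / 8 + m * π ≠ 0 := by
  have := quarter_ne 1 8 (by decide) (by decide) m
  push_cast at this
  rwa [one_mul] at this

lemma ne58 (m : ℤ) : 5 * π / 8 + m * π ≠ 0 := by
  have := quarter_ne 5 8 (by decide) (by decide) m
  push_cast at this
  exact this

lemma ne34 (m : ℤ) : 3 * π / 4 + m * π ≠ 0 := by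
  have := quarter_ne 3 4 (by decide) (by decide) m
  push_cast at this
  exact this

lemma sub_set {q : ℕ} (v : EuclideanSpace ℝ (Fin q)) (a : ℝ) (ha : ∀ m : ℤ, a + m * π ≠ 0) :
    ({x : Fin q × ℤ | v = (-(a + x.2 * π)⁻¹) • stdVec q x.1}).Finite := by
  apply Set.Subsingleton.finite
  rintro ⟨i, m⟩ h ⟨j, n⟩ h'
  simp only [Set.mem_ofPred_eq] at h h'
  obtain ⟨h1, h2⟩ := smul_std_inj (neg_ne_zero.2 (inv_ne_zero (ha m))) (h.symm.trans h')
  have h3 : (m : ℝ) * π = n * π := by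
    have := inv_injective (neg_injective h2)
    linarith
  have h4 : m = n := by exact_mod_cast mul_right_cancel₀ pi_ne_zero h3
  rw [h1, h4]

lemma key3 {q : ℕ} (v : EuclideanSpace ℝ (Fin q)) :
    Set.ncard {x : Fin q × ℤ | -v = (-(3 * π / 4 + x.2 * π)⁻¹) • ((2 : ℝ) • stdVec q x.1)} =
    Set.ncard {x : Fin q × ℤ | v = (-(π / 8 + x.2 * π)⁻¹) • stdVec q x.1} +
    Set.ncard {x : Fin q × ℤ | v = (-(5 * π / 8 + x.2 * π)⁻¹) • stdVec q x.1} := by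
  have i1 : Function.Injective (fun x : Fin q × ℤ => (x.1, -1 - 2 * x.2)) := by
    rintro ⟨i, m⟩ ⟨j, n⟩ h
    simp only [Prod.mk.injEq] at h ⊢
    exact ⟨h.1, by omega⟩
  have i2 : Function.Injective (fun x : Fin q × ℤ => (x.1, -2 - 2 * x.2)) := by
    rintro ⟨i, m⟩ ⟨j, n⟩ h
    simp only [Prod.mk.injEq] at h ⊢
    exact ⟨h.1, by omega⟩
  rw [← Set.ncard_image_of_injective {x : Fin q × ℤ | v = (-(π / 8 + x.2 * π)⁻¹) • stdVec q x.1} i1, ← Set.ncard_image_of_injective {x : Fin q × ℤ | v = (-(5 * π / 8 + x.2 * π)⁻¹) • stdVec q x.1} i2,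
    ← Set.ncard_union_eq _ ((sub_set v _ ne18).image _) ((sub_set v _ ne58).image _)]
  · congr 1
    have e1 : ∀ k : ℤ, -(-(3 * π / 4 + ((-1 - 2 * k : ℤ) : ℝ) * π)⁻¹ * 2) = -(π / 8 + k * π)⁻¹ := by
      intro k
      have : 3 * π / 4 + ((-1 - 2 * k : ℤ) : ℝ) * π = (-2) * (π / 8 + k * π) := by
        push_cast; ring
      rw [this, mul_inv]; ring
    have e2 : ∀ k : ℤ, -(-(3 * π / 4 + ((-2 - 2 * k : ℤ) : ℝ) * π)⁻¹ * 2) = -(5 * π / 8 + k * π)⁻¹ := by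
      intro k
      have : 3 * π / 4 + ((-2 - 2 * k : ℤ) : ℝ) * π = (-2) * (5 * π / 8 + k * π) := by
        push_cast; ring
      rw [this, mul_inv]; ring
    ext ⟨i, m⟩
    simp only [Set.mem_ofPred_eq, Set.mem_union, Set.mem_image, Prod.exists, Prod.mk.injEq,
      smul_smul, neg_eq_iff_eq_neg, ← neg_smul]
    constructor
    · intro h
      rcases Int.even_or_odd' m with ⟨k, hk | hk⟩
      · right
        refine ⟨i, -1 - k, ?_, rfl, by omega⟩
        rw [← e2, show -2 - 2 * (-1 - k) = m by omega]
        exact h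
      · left
        refine ⟨i, -1 - k, ?_, rfl, by omega⟩
        rw [← e1, show -1 - 2 * (-1 - k) = m by omega]
        exact h
    · rintro (⟨j, k, h, rfl, rfl⟩ | ⟨j, k, h, rfl, rfl⟩)
      · rw [e1]; exact h
      · rw [e2]; exact h
  · rw [Set.disjoint_left]
    rintro _ ⟨⟨i, m⟩, -, rfl⟩ ⟨⟨j, n⟩, -, h⟩
    simp only [Prod.mk.injEq] at h
    omega

lemma key_inv {q : ℕ} (c : ℤ) (P Q : Fin q × Fin q × ℤ → Prop)
    (h : ∀ i j m, P (i, j, m) ↔ Q (i, j, c - m)) :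
    Set.ncard {x | P x} = Set.ncard {x | Q x} := by
  have i1 : Function.Injective (fun x : Fin q × Fin q × ℤ => (x.1, x.2.1, c - x.2.2)) := by
    rintro ⟨i, j, m⟩ ⟨i', j', n⟩ h
    simp only [Prod.mk.injEq] at h ⊢
    exact ⟨h.1, h.2.1, by omega⟩
  rw [← Set.ncard_image_of_injective _ i1]
  congr 1
  ext ⟨i, j, m⟩
  simp only [Set.mem_ofPred_eq, Set.mem_image, Prod.exists, Prod.mk.injEq]
  constructor
  · rintro ⟨i', j', k, hP, rfl, rfl, rfl⟩
    exact (h _ _ _).1 hP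
  · intro hQ
    refine ⟨i, j, c - m, ?_, rfl, rfl, by omega⟩
    rw [h]
    simpa using hQ

lemma key2 {q : ℕ} (v : EuclideanSpace ℝ (Fin q)) :
    Set.ncard {x : Fin q × Fin q × ℤ | x.1 < x.2.1 ∧
      v = (-(π / 4 + x.2.2 * π)⁻¹) • (stdVec q x.1 + stdVec q x.2.1)} =
    Set.ncard {x : Fin q × Fin q × ℤ | x.1 < x.2.1 ∧
      -v = (-(3 * π / 4 + x.2.2 * π)⁻¹) • (stdVec q x.1 + stdVec q x.2.1)} := by
  apply key_inv (-1)
  intro i j m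
  have : 3 * π / 4 + ((-1 - m : ℤ) : ℝ) * π = -(π / 4 + m * π) := by push_cast; ring
  simp only [this, inv_neg, neg_neg, neg_eq_iff_eq_neg, ← neg_smul]

lemma key6 {q : ℕ} (v : EuclideanSpace ℝ (Fin q)) :
    Set.ncard {x : Fin q × Fin q × ℤ | x.1 < x.2.1 ∧
      v = (-(π / 2 + x.2.2 * π)⁻¹) • (stdVec q x.1 - stdVec q x.2.1)} =
    Set.ncard {x : Fin q × Fin q × ℤ | x.1 < x.2.1 ∧
      -v = (-(π / 2 + x.2.2 * π)⁻¹) • (stdVec q x.1 - stdVec q x.2.1)} := by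
  apply key_inv (-1)
  intro i j m
  have : π / 2 + ((-1 - m : ℤ) : ℝ) * π = -(π / 2 + m * π) := by push_cast; ring
  simp only [this, inv_neg, neg_neg, neg_eq_iff_eq_neg, ← neg_smul]

lemma key7 {q : ℕ} (v : EuclideanSpace ℝ (Fin q)) :
    Set.ncard {x : Fin q × Fin q × ℤ | x.1 < x.2.1 ∧ x.2.2 ≠ 0 ∧
      v = ((x.2.2 * π)⁻¹ : ℝ) • (stdVec q x.1 - stdVec q x.2.1)} =
    Set.ncard {x : Fin q × Fin q × ℤ | x.1 < x.2.1 ∧ x.2.2 ≠ 0 ∧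
      -v = ((x.2.2 * π)⁻¹ : ℝ) • (stdVec q x.1 - stdVec q x.2.1)} := by
  apply key_inv 0
  intro i j m
  have : ((0 - m : ℤ) : ℝ) * π = -(m * π) := by push_cast; ring
  have h0 : (0 - m ≠ 0) ↔ m ≠ 0 := by omega
  simp only [this, h0, inv_neg, neg_neg, neg_eq_iff_eq_neg, ← neg_smul]

/-- Section 8 of the paper: the `P(G,H×K)`-orbit is an austere PF submanifold — i.e.
`c(v) = c(-v)` for every nonzero `v` — if and only if `p = q + 1`. -/
theorem path_orbit_austere_iff (p q : ℕ) (hq : 1 ≤ q) (hpq : q < p) :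
    (∀ v : EuclideanSpace ℝ (Fin q), v ≠ 0 →
        pathOrbitCurvatureCount p q v = pathOrbitCurvatureCount p q (-v)) ↔
      p = q + 1 := by
  constructor
  · intro H
    let i0 : Fin q := ⟨0, hq⟩
    let v : EuclideanSpace ℝ (Fin q) := (-(π / 8 + ((0 : ℤ) : ℝ) * π)⁻¹) • stdVec q i0
    have hv : v ≠ 0 := by
      intro h
      have h1 := congrArg (fun w : EuclideanSpace ℝ (Fin q) => w i0) h
      simp [v, stdVec, pi_ne_zero] at h1
    have h := H v hv
    have k2' := key2 (-v)
    have k3' := key3 (-v)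
    rw [neg_neg] at k2' k3'
    have hpos : 0 < Set.ncard {x : Fin q × ℤ | v = (-(π / 8 + x.2 * π)⁻¹) • stdVec q x.1} := by
      rw [Set.ncard_pos (sub_set v _ ne18)]
      exact ⟨(i0, 0), rfl⟩
    have hzero : Set.ncard {x : Fin q × ℤ |
        v = (-(3 * π / 4 + x.2 * π)⁻¹) • ((2 : ℝ) • stdVec q x.1)} = 0 := by
      convert Set.ncard_empty (Fin q × ℤ)
      rw [Set.eq_empty_iff_forall_notMem]
      rintro ⟨j, m⟩ hx
      simp only [Set.mem_ofPred_eq, smul_smul, v] at hx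
      obtain ⟨-, h2⟩ := smul_std_inj (neg_ne_zero.2 (inv_ne_zero (ne18 0))) hx
      have a1 := ne18 0
      have a2 := ne34 m
      have h3 : 3 * π / 4 + m * π = 2 * (π / 8 + ((0 : ℤ) : ℝ) * π) := by
        generalize 3 * π / 4 + m * π = X at *
        generalize π / 8 + ((0 : ℤ) : ℝ) * π = Y at *
        field_simp at h2
        linarith
      push_cast at h3
      have h4 : (1 + 2 * (m : ℝ)) * π = 0 := by linarith
      have h5 : (1 + 2 * (m : ℝ)) = 0 := (mul_eq_zero.1 h4).resolve_right pi_ne_zero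
      have h6 : 1 + 2 * m = 0 := by exact_mod_cast h5
      omega
    unfold pathOrbitCurvatureCount at h
    rw [← key2 v, k2', ← key6 v, ← key7 v, key3 v] at h
    rw [hzero] at h k3'
    obtain ⟨d, rfl⟩ := Nat.exists_eq_add_of_lt hpq
    rw [show q + d + 1 - q = d + 1 by omega] at h
    rw [Nat.eq_zero_of_add_eq_zero_right k3'.symm, Nat.eq_zero_of_add_eq_zero_left k3'.symm] at h
    have : d = 0 := by
      by_contra hd
      have : 1 ≤ d := by omega
      nlinarith
    omega
  · rintro rfl v -
    have k2' := key2 (-v)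
    have k3' := key3 (-v)
    rw [neg_neg] at k2' k3'
    unfold pathOrbitCurvatureCount
    rw [← key2 v, k2', ← key6 v, ← key7 v, key3 v, k3']
    rw [show q + 1 - q = 1 by omega]
    ring
end
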